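/- For every δ ∈ (0, 1/64), in the instance J_δ: the uncertainty level satisfies d(C) = δ; there exists a menu of two deterministic contracts Π with R(Π) ≤ √δ/10; and every randomized contract γ satisfies R(γ) ≥ √δ/9. -/

import Mathlib

open Finset

variable {A Ω : Type} [Fintype A] [Fintype Ω] [Nonempty A] [Nonempty Ω]

/-- Agent's expected utility `U^a(p,c,a)` of action `a` under contract `p` and costs `c`. -/
noncomputable def Uag (F : A → Ω → ℝ) (p : Ω → ℝ) (c : A → ℝ) (a : A) : ℝ :=
  (∑ ω, F a ω * p ω) - c a

/-- Principal's expected utility when the agent plays action `a` under contract `p`. -/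
noncomputable def prinAct (F : A → Ω → ℝ) (r p : Ω → ℝ) (a : A) : ℝ :=
  ∑ ω, F a ω * (r ω - p ω)

/-- Principal's expected utility `U^p(p,c)`: the agent plays a best response,
with ties among best responses broken in favor of the principal. -/
noncomputable def Uprin (F : A → Ω → ℝ) (r p : Ω → ℝ) (c : A → ℝ) : ℝ :=
  sSup { x | ∃ a : A, (∀ a' : A, Uag F p c a' ≤ Uag F p c a) ∧ x = prinAct F r p a }

/-- A deterministic contract: nonnegative payments. -/
def IsContract (p : Ω → ℝ) : Prop := ∀ ω, 0 ≤ p ω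

/-- `OPT(c)`: the supremum over contracts of the principal's expected utility against `c`. -/
noncomputable def OPT (F : A → Ω → ℝ) (r : Ω → ℝ) (c : A → ℝ) : ℝ :=
  sSup { x | ∃ p : Ω → ℝ, IsContract p ∧ x = Uprin F r p c }

/-- The regret `R(p)` of a deterministic contract `p`. -/
noncomputable def regret (F : A → Ω → ℝ) (r : Ω → ℝ) (C : Set (A → ℝ)) (p : Ω → ℝ) : ℝ :=
  sSup { x | ∃ c ∈ C, x = OPT F r c - Uprin F r p c }

/-- Uncertainty level `d(C)`: the L∞-diameter of the uncertainty set. -/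
noncomputable def uncLevel (C : Set (A → ℝ)) : ℝ :=
  sSup { x | ∃ c ∈ C, ∃ c' ∈ C, x = ‖c - c'‖ }

/-- The assumptions defining a principal–agent instance `(A, Ω, r, C, F)`. -/
structure IsPAInstance (F : A → Ω → ℝ) (r : Ω → ℝ) (C : Set (A → ℝ)) : Prop where
  r_mem : ∀ ω, r ω ∈ Set.Icc (0:ℝ) 1
  F_mem : ∀ a ω, F a ω ∈ Set.Icc (0:ℝ) 1
  F_sum : ∀ a, ∑ ω, F a ω = 1
  C_nonempty : C.Nonempty
  C_mem : ∀ c ∈ C, ∀ a, c a ∈ Set.Icc (0:ℝ) 1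
  zero_action : ∃ a : A, ∀ c ∈ C, c a = 0

/-- The agent's best-response utility under contract `p`. -/
noncomputable def agentBest (F : A → Ω → ℝ) (p : Ω → ℝ) (c : A → ℝ) : ℝ :=
  ⨆ a : A, Uag F p c a

/-- Principal's expected utility `U^p(Π,c)` under a menu of deterministic contracts:
the agent selects an element maximizing its own utility, breaking ties in favor of
the principal. -/
noncomputable def UprinMenu (F : A → Ω → ℝ) (r : Ω → ℝ) {K : ℕ} (m : Fin K → Ω → ℝ)
    (c : A → ℝ) : ℝ :=
  sSup { x | ∃ i : Fin K, (∀ j : Fin K, agentBest F (m j) c ≤ agentBest F (m i) c) ∧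
    x = Uprin F r (m i) c }

/-- The regret `R(Π)` of a menu of deterministic contracts. -/
noncomputable def regretMenu (F : A → Ω → ℝ) (r : Ω → ℝ) (C : Set (A → ℝ)) {K : ℕ}
    (m : Fin K → Ω → ℝ) : ℝ :=
  sSup { x | ∃ c ∈ C, x = OPT F r c - UprinMenu F r m c }

/-- A randomized contract: a finitely supported probability distribution over
deterministic contracts, represented as a finite tuple of contracts with probabilities. -/
structure RandCon (Ω : Type) where
  n : ℕ
  ps : Fin n → Ω → ℝ
  q : Fin n → ℝ
  q_nonneg : ∀ i, 0 ≤ q i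
  q_sum : ∑ i, q i = 1

/-- All the contracts in the support are genuine (nonnegative) contracts. -/
def RandCon.valid {Ω : Type} (γ : RandCon Ω) : Prop := ∀ i ω, 0 ≤ γ.ps i ω

/-- Agent's expected utility `U^a(γ,c)` of a randomized contract. -/
noncomputable def UagRand (F : A → Ω → ℝ) (γ : RandCon Ω) (c : A → ℝ) : ℝ :=
  ∑ i, γ.q i * (⨆ a : A, Uag F (γ.ps i) c a)

/-- Principal's expected utility `U^p(γ,c)` of a randomized contract. -/
noncomputable def UprinRand (F : A → Ω → ℝ) (r : Ω → ℝ) (γ : RandCon Ω) (c : A → ℝ) : ℝ :=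
  ∑ i, γ.q i * Uprin F r (γ.ps i) c

/-- The regret `R(γ)` of a randomized contract. -/
noncomputable def regretRand (F : A → Ω → ℝ) (r : Ω → ℝ) (C : Set (A → ℝ))
    (γ : RandCon Ω) : ℝ :=
  sSup { x | ∃ c ∈ C, x = OPT F r c - UprinRand F r γ c }

/-- Principal's expected utility `U^p(Γ,c)` under a menu of randomized contracts:
the agent selects an element maximizing its own expected utility, breaking ties in
favor of the principal. -/
noncomputable def UprinRMenu (F : A → Ω → ℝ) (r : Ω → ℝ) {K : ℕ} (Γ : Fin K → RandCon Ω)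
    (c : A → ℝ) : ℝ :=
  sSup { x | ∃ i : Fin K, (∀ j : Fin K, UagRand F (Γ j) c ≤ UagRand F (Γ i) c) ∧
    x = UprinRand F r (Γ i) c }

/-- The regret `R(Γ)` of a menu of randomized contracts. -/
noncomputable def regretRMenu (F : A → Ω → ℝ) (r : Ω → ℝ) (C : Set (A → ℝ)) {K : ℕ}
    (Γ : Fin K → RandCon Ω) : ℝ :=
  sSup { x | ∃ c ∈ C, x = OPT F r c - UprinRMenu F r Γ c }


section helpers

theorem Uprin_attained (F : A → Ω → ℝ) (r p : Ω → ℝ) (c : A → ℝ) :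
    ∃ a : A, (∀ a' : A, Uag F p c a' ≤ Uag F p c a) ∧ Uprin F r p c = prinAct F r p a := by
  have hfin : { x | ∃ a : A, (∀ a' : A, Uag F p c a' ≤ Uag F p c a) ∧
      x = prinAct F r p a }.Finite := by
    refine (Set.finite_range (prinAct F r p)).subset ?_
    rintro x ⟨a, -, rfl⟩
    exact ⟨a, rfl⟩
  obtain ⟨a, ha⟩ := Finite.exists_max (Uag F p c)
  have hne : { x | ∃ a : A, (∀ a' : A, Uag F p c a' ≤ Uag F p c a) ∧
      x = prinAct F r p a }.Nonempty := ⟨prinAct F r p a, a, ha, rfl⟩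
  exact hne.csSup_mem hfin

theorem le_Uprin (F : A → Ω → ℝ) (r p : Ω → ℝ) (c : A → ℝ) (a : A)
    (ha : ∀ a' : A, Uag F p c a' ≤ Uag F p c a) : prinAct F r p a ≤ Uprin F r p c := by
  refine le_csSup ?_ ⟨a, ha, rfl⟩
  refine ((Set.finite_range (prinAct F r p)).subset ?_).bddAbove
  rintro x ⟨a, -, rfl⟩
  exact ⟨a, rfl⟩

theorem le_OPT (F : A → Ω → ℝ) (r : Ω → ℝ) (c : A → ℝ) (B : ℝ)
    (hB : ∀ p, IsContract p → Uprin F r p c ≤ B) (p : Ω → ℝ) (hp : IsContract p) :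
    Uprin F r p c ≤ OPT F r c := by
  refine le_csSup ⟨B, ?_⟩ ⟨p, hp, rfl⟩
  rintro x ⟨p, hp, rfl⟩
  exact hB p hp

theorem OPT_le (F : A → Ω → ℝ) (r : Ω → ℝ) (c : A → ℝ) (B : ℝ)
    (hB : ∀ p, IsContract p → Uprin F r p c ≤ B) : OPT F r c ≤ B := by
  refine csSup_le ⟨_, 0, fun _ => le_rfl, rfl⟩ ?_
  rintro x ⟨p, hp, rfl⟩
  exact hB p hp

theorem le_UprinMenu (F : A → Ω → ℝ) (r : Ω → ℝ) {K : ℕ} (m : Fin K → Ω → ℝ) (c : A → ℝ)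
    (i : Fin K) (h : ∀ j : Fin K, agentBest F (m j) c ≤ agentBest F (m i) c) :
    Uprin F r (m i) c ≤ UprinMenu F r m c := by
  refine le_csSup ?_ ⟨i, h, rfl⟩
  refine ((Set.finite_range (fun i => Uprin F r (m i) c)).subset ?_).bddAbove
  rintro x ⟨a, -, rfl⟩
  exact ⟨a, rfl⟩

theorem agentBest_le_of (F : A → Ω → ℝ) (p p' : Ω → ℝ) (c : A → ℝ) (a : A)
    (h : ∀ a', Uag F p c a' ≤ Uag F p' c a) : agentBest F p c ≤ agentBest F p' c :=
  (ciSup_le h).trans (le_ciSup (f := Uag F p' c) (Set.finite_range _).bddAbove a)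

/-- The outcome matrix, with `s = √δ`. -/
noncomputable def FJ (s : ℝ) : Fin 5 → Fin 3 → ℝ :=
  ![![(1:ℝ), 0, 0], ![1 - s, 0, s], ![0, 1, 0], ![0, 1 - s, s],
    ![1/2 - s/4, 1/2 - s/4, s/2]]

/-- The cost vectors: extra costs `x` and `y` on the two good actions. -/
noncomputable def cJ (s x y : ℝ) : Fin 5 → ℝ := ![s/10 + x, s/10, s/10 + y, s/10, 0]

/-- The rewards. -/
noncomputable def rJ : Fin 3 → ℝ := ![(1:ℝ), 1, 0]

theorem Uag_J (s x y : ℝ) (p : Fin 3 → ℝ) :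
    Uag (FJ s) p (cJ s x y) 0 = p 0 - s/10 - x ∧
    Uag (FJ s) p (cJ s x y) 1 = (1-s) * p 0 + s * p 2 - s/10 ∧
    Uag (FJ s) p (cJ s x y) 2 = p 1 - s/10 - y ∧
    Uag (FJ s) p (cJ s x y) 3 = (1-s) * p 1 + s * p 2 - s/10 ∧
    Uag (FJ s) p (cJ s x y) 4 = (1/2-s/4) * (p 0 + p 1) + s/2 * p 2 := by
  refine ⟨?_, ?_, ?_, ?_, ?_⟩ <;> simp [Uag, FJ, cJ, Fin.sum_univ_three] <;> ring

theorem prinAct_J (s : ℝ) (p : Fin 3 → ℝ) :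
    prinAct (FJ s) rJ p 0 = 1 - p 0 ∧
    prinAct (FJ s) rJ p 1 = (1-s) * (1 - p 0) - s * p 2 ∧
    prinAct (FJ s) rJ p 2 = 1 - p 1 ∧
    prinAct (FJ s) rJ p 3 = (1-s) * (1 - p 1) - s * p 2 ∧
    prinAct (FJ s) rJ p 4 = 1 - s/2 - (1/2-s/4) * (p 0 + p 1) - s/2 * p 2 := by
  refine ⟨?_, ?_, ?_, ?_, ?_⟩ <;> simp [prinAct, FJ, rJ, Fin.sum_univ_three] <;> ring

/-- Classification of the principal's utility. -/
theorem Uprin_J (s x y : ℝ) (hs : 0 < s) (hs' : s < 1/8) (p : Fin 3 → ℝ) (hp : IsContract p) :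
    Uprin (FJ s) rJ p (cJ s x y) ≤ 1 - s ∨
    Uprin (FJ s) rJ p (cJ s x y) ≤ 1 - s/2 - (1/2-s/4) * (p 0 + p 1) ∨
    (Uprin (FJ s) rJ p (cJ s x y) ≤ 1 - p 0 ∧ x ≤ s * p 0 ∧
      s/10 + x + (1/2-s/4) * p 1 ≤ (1/2+s/4) * p 0) ∨
    (Uprin (FJ s) rJ p (cJ s x y) ≤ 1 - p 1 ∧ y ≤ s * p 1 ∧
      s/10 + y + (1/2-s/4) * p 0 ≤ (1/2+s/4) * p 1) := by
  obtain ⟨a, ha, hU⟩ := Uprin_attained (FJ s) rJ p (cJ s x y)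
  obtain ⟨u0, u1, u2, u3, u4⟩ := Uag_J s x y p
  obtain ⟨v0, v1, v2, v3, v4⟩ := prinAct_J s p
  have h0 := ha 0
  have h1 := ha 1
  have h2 := ha 2
  have h3 := ha 3
  have h4 := ha 4
  have q0 := hp 0
  have q1 := hp 1
  have q2 := hp 2
  have m0 : 0 ≤ (1-s) * p 0 := mul_nonneg (by linarith) q0
  have m1 : 0 ≤ (1-s) * p 1 := mul_nonneg (by linarith) q1
  have m2 : 0 ≤ s * p 2 := by positivity
  rw [hU]
  fin_cases a
  · right; right; left
    simp only [Fin.zero_eta, u0, u1, u2, u3, u4, v0] at *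
    refine ⟨le_rfl, ?_, ?_⟩ <;> linarith
  · left
    simp only [Fin.mk_one, v1] at *
    linarith
  · right; right; right
    simp only [Fin.reduceFinMk, u0, u1, u2, u3, u4, v2] at *
    refine ⟨le_rfl, ?_, ?_⟩ <;> linarith
  · left
    simp only [Fin.reduceFinMk, v3] at *
    linarith
  · right; left
    simp only [Fin.reduceFinMk, v4] at *
    linarith

theorem U1_J (s : ℝ) (hs : 0 < s) (hs' : s < 1/8) (p : Fin 3 → ℝ) (hp : IsContract p) :
    Uprin (FJ s) rJ p (cJ s 0 (s^2)) ≤ 1 - s ∨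
    Uprin (FJ s) rJ p (cJ s 0 (s^2)) ≤ 1 - s/2 - (1/2-s/4) * (p 0 + p 1) ∨
    (Uprin (FJ s) rJ p (cJ s 0 (s^2)) ≤ 1 - p 0 ∧
      s/10 + (1/2-s/4) * p 1 ≤ (1/2+s/4) * p 0) := by
  rcases Uprin_J s 0 (s^2) hs hs' p hp with h | h | ⟨h, -, h'⟩ | ⟨h, h', -⟩
  · exact Or.inl h
  · exact Or.inr (Or.inl h)
  · exact Or.inr (Or.inr ⟨h, by linarith⟩)
  · left
    have : s ≤ p 1 := by nlinarith
    linarith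

theorem U2_J (s : ℝ) (hs : 0 < s) (hs' : s < 1/8) (p : Fin 3 → ℝ) (hp : IsContract p) :
    Uprin (FJ s) rJ p (cJ s (s^2) 0) ≤ 1 - s ∨
    Uprin (FJ s) rJ p (cJ s (s^2) 0) ≤ 1 - s/2 - (1/2-s/4) * (p 0 + p 1) ∨
    (Uprin (FJ s) rJ p (cJ s (s^2) 0) ≤ 1 - p 1 ∧
      s/10 + (1/2-s/4) * p 0 ≤ (1/2+s/4) * p 1) := by
  rcases Uprin_J s (s^2) 0 hs hs' p hp with h | h | ⟨h, h', -⟩ | ⟨h, -, h'⟩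
  · exact Or.inl h
  · exact Or.inr (Or.inl h)
  · left
    have : s ≤ p 0 := by nlinarith
    linarith
  · exact Or.inr (Or.inr ⟨h, by linarith⟩)

theorem U3_J (s : ℝ) (hs : 0 < s) (hs' : s < 1/8) (p : Fin 3 → ℝ) (hp : IsContract p) :
    Uprin (FJ s) rJ p (cJ s (s^2) (s^2)) ≤ 1 - s ∨
    Uprin (FJ s) rJ p (cJ s (s^2) (s^2)) ≤ 1 - s/2 - (1/2-s/4) * (p 0 + p 1) := by
  rcases Uprin_J s (s^2) (s^2) hs hs' p hp with h | h | ⟨h, h', -⟩ | ⟨h, h', -⟩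
  · exact Or.inl h
  · exact Or.inr h
  · left
    have : s ≤ p 0 := by nlinarith
    linarith
  · left
    have : s ≤ p 1 := by nlinarith
    linarith

theorem key_bound (s a b : ℝ) (hs : 0 < s) (hs' : s < 1/8) (ha : 0 ≤ a) (hb : 0 ≤ b)
    (h : s/10 + (1/2-s/4) * b ≤ (1/2+s/4) * a) : 0.188 * s ≤ a ∧
    0.088 * s ≤ (1/2-s/4) * (a + b) := by
  have h1 : 0 ≤ (1/2-s/4) * b := mul_nonneg (by linarith) hb
  have h2 : (1/8 - s) * a ≥ 0 := mul_nonneg (by linarith) ha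
  constructor <;> nlinarith

theorem sum_J (s : ℝ) (hs : 0 < s) (hs' : s < 1/8) (p : Fin 3 → ℝ) (hp : IsContract p) :
    Uprin (FJ s) rJ p (cJ s 0 (s^2)) + Uprin (FJ s) rJ p (cJ s (s^2) 0)
      + 2 * Uprin (FJ s) rJ p (cJ s (s^2) (s^2)) ≤ 4 - 1.4 * s - 4 * s / 9 := by
  have q0 := hp 0
  have q1 := hp 1
  have hT : 0 ≤ (1/2-s/4) * (p 0 + p 1) := mul_nonneg (by linarith) (by linarith)
  have h3 := U3_J s hs hs' p hp
  rcases U1_J s hs hs' p hp with h1 | h1 | ⟨h1, e1⟩ <;>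
  rcases U2_J s hs hs' p hp with h2 | h2 | ⟨h2, e2⟩
  · rcases h3 with h3 | h3 <;> linarith
  · rcases h3 with h3 | h3 <;> linarith
  · obtain ⟨k1, k2⟩ := key_bound s (p 1) (p 0) hs hs' q1 q0 e2
    rw [add_comm] at k2
    rcases h3 with h3 | h3 <;> linarith
  · rcases h3 with h3 | h3 <;> linarith
  · rcases h3 with h3 | h3 <;> linarith
  · obtain ⟨k1, k2⟩ := key_bound s (p 1) (p 0) hs hs' q1 q0 e2
    rw [add_comm] at k2
    rcases h3 with h3 | h3 <;> linarith
  · obtain ⟨k1, k2⟩ := key_bound s (p 0) (p 1) hs hs' q0 q1 e1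
    rcases h3 with h3 | h3 <;> linarith
  · obtain ⟨k1, k2⟩ := key_bound s (p 0) (p 1) hs hs' q0 q1 e1
    rcases h3 with h3 | h3 <;> linarith
  · have : 2/5 ≤ p 0 + p 1 := by
      have : s * (2/5) ≤ s * (p 0 + p 1) := by linarith
      exact le_of_mul_le_mul_left this hs
    rcases h3 with h3 | h3 <;> linarith

theorem Uprin_J_le_one (s x y : ℝ) (hs : 0 < s) (hs' : s < 1/8) (p : Fin 3 → ℝ)
    (hp : IsContract p) : Uprin (FJ s) rJ p (cJ s x y) ≤ 1 := by
  have q0 := hp 0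
  have q1 := hp 1
  have hT : 0 ≤ (1/2-s/4) * (p 0 + p 1) := mul_nonneg (by linarith) (by linarith)
  rcases Uprin_J s x y hs hs' p hp with h | h | ⟨h, -, h'⟩ | ⟨h, h', -⟩ <;> linarith

/-- First contract of the menu. -/
noncomputable def pL (s : ℝ) : Fin 3 → ℝ := ![s/5, 0, 0]

/-- Second contract of the menu. -/
noncomputable def pR (s : ℝ) : Fin 3 → ℝ := ![0, s/5, 0]

theorem pL_con (s : ℝ) (hs : 0 < s) : IsContract (pL s) := by
  intro i; fin_cases i <;> simp [pL]; linarith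

theorem pR_con (s : ℝ) (hs : 0 < s) : IsContract (pR s) := by
  intro i; fin_cases i <;> simp [pR]; linarith

theorem all_of (u : Fin 5 → ℝ) (B : ℝ) (h0 : u 0 ≤ B) (h1 : u 1 ≤ B) (h2 : u 2 ≤ B)
    (h3 : u 3 ≤ B) (h4 : u 4 ≤ B) : ∀ a, u a ≤ B := by
  intro a; fin_cases a <;> assumption

theorem best_L (s : ℝ) (hs : 0 < s) (hs' : s < 1/8) :
    (∀ a, Uag (FJ s) (pL s) (cJ s 0 (s^2)) a ≤ Uag (FJ s) (pL s) (cJ s 0 (s^2)) 0) ∧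
    (∀ a, Uag (FJ s) (pR s) (cJ s 0 (s^2)) a ≤ Uag (FJ s) (pL s) (cJ s 0 (s^2)) 0) := by
  obtain ⟨u0, u1, u2, u3, u4⟩ := Uag_J s 0 (s^2) (pL s)
  obtain ⟨v0, v1, v2, v3, v4⟩ := Uag_J s 0 (s^2) (pR s)
  simp [pL] at u0 u1 u2 u3 u4
  simp [pR] at v0 v1 v2 v3 v4
  constructor <;> apply all_of <;> simp only [pL, pR, *] <;> nlinarith

theorem best_R (s : ℝ) (hs : 0 < s) (hs' : s < 1/8) :
    (∀ a, Uag (FJ s) (pL s) (cJ s (s^2) 0) a ≤ Uag (FJ s) (pR s) (cJ s (s^2) 0) 2) ∧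
    (∀ a, Uag (FJ s) (pR s) (cJ s (s^2) 0) a ≤ Uag (FJ s) (pR s) (cJ s (s^2) 0) 2) := by
  obtain ⟨u0, u1, u2, u3, u4⟩ := Uag_J s (s^2) 0 (pL s)
  obtain ⟨v0, v1, v2, v3, v4⟩ := Uag_J s (s^2) 0 (pR s)
  simp [pL] at u0 u1 u2 u3 u4
  simp [pR] at v0 v1 v2 v3 v4
  constructor <;> apply all_of <;> simp only [pL, pR, *] <;> nlinarith

theorem best_C (s : ℝ) (hs : 0 < s) (hs' : s < 1/8) :
    (∀ a, Uag (FJ s) (pL s) (cJ s (s^2) (s^2)) a ≤ Uag (FJ s) (pL s) (cJ s (s^2) (s^2)) 4) ∧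
    (∀ a, Uag (FJ s) (pR s) (cJ s (s^2) (s^2)) a ≤ Uag (FJ s) (pL s) (cJ s (s^2) (s^2)) 4) := by
  obtain ⟨u0, u1, u2, u3, u4⟩ := Uag_J s (s^2) (s^2) (pL s)
  obtain ⟨v0, v1, v2, v3, v4⟩ := Uag_J s (s^2) (s^2) (pR s)
  simp [pL] at u0 u1 u2 u3 u4
  simp [pR] at v0 v1 v2 v3 v4
  constructor <;> apply all_of <;> simp only [pL, pR, *] <;> nlinarith

theorem best_0 (s : ℝ) (hs : 0 < s) :
    ∀ a, Uag (FJ s) 0 (cJ s (s^2) (s^2)) a ≤ Uag (FJ s) 0 (cJ s (s^2) (s^2)) 4 := by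
  obtain ⟨u0, u1, u2, u3, u4⟩ := Uag_J s (s^2) (s^2) 0
  simp only [Pi.zero_apply] at u0 u1 u2 u3 u4
  apply all_of <;> simp only [*] <;> nlinarith

theorem UL (s : ℝ) (hs : 0 < s) (hs' : s < 1/8) :
    1 - s/5 ≤ Uprin (FJ s) rJ (pL s) (cJ s 0 (s^2)) := by
  have h := le_Uprin (FJ s) rJ (pL s) _ 0 (best_L s hs hs').1
  rw [(prinAct_J s (pL s)).1] at h
  simpa [pL] using h

theorem UR (s : ℝ) (hs : 0 < s) (hs' : s < 1/8) :
    1 - s/5 ≤ Uprin (FJ s) rJ (pR s) (cJ s (s^2) 0) := by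
  have h := le_Uprin (FJ s) rJ (pR s) _ 2 (best_R s hs hs').2
  rw [(prinAct_J s (pR s)).2.2.1] at h
  simpa [pR] using h

theorem UC (s : ℝ) (hs : 0 < s) (hs' : s < 1/8) :
    1 - s/2 - s/10 ≤ Uprin (FJ s) rJ (pL s) (cJ s (s^2) (s^2)) := by
  have h := le_Uprin (FJ s) rJ (pL s) _ 4 (best_C s hs hs').1
  rw [(prinAct_J s (pL s)).2.2.2.2] at h
  simp [pL] at h ⊢
  nlinarith

theorem U0 (s : ℝ) (hs : 0 < s) :
    1 - s/2 ≤ Uprin (FJ s) rJ 0 (cJ s (s^2) (s^2)) := by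
  have h := le_Uprin (FJ s) rJ 0 _ 4 (best_0 s hs)
  rw [(prinAct_J s 0).2.2.2.2] at h
  simpa using h

theorem menu_J (s : ℝ) (hs : 0 < s) (hs' : s < 1/8) (c : Fin 5 → ℝ)
    (hc : c = cJ s 0 (s^2) ∨ c = cJ s (s^2) 0 ∨ c = cJ s (s^2) (s^2)) :
    OPT (FJ s) rJ c - UprinMenu (FJ s) rJ ![pL s, pR s] c ≤ s / 10 := by
  rcases hc with rfl | rfl | rfl
  · have h1 : OPT (FJ s) rJ (cJ s 0 (s^2)) ≤ 1 - 0.188 * s := by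
      refine OPT_le _ _ _ _ fun p hp => ?_
      have hT : 0 ≤ (1/2-s/4) * (p 0 + p 1) :=
        mul_nonneg (by linarith) (add_nonneg (hp 0) (hp 1))
      rcases U1_J s hs hs' p hp with h | h | ⟨h, e⟩
      · linarith
      · linarith
      · have := (key_bound s _ _ hs hs' (hp 0) (hp 1) e).1
        linarith
    have h2 := le_UprinMenu (FJ s) rJ ![pL s, pR s] (cJ s 0 (s^2)) 0 (by
      intro j; fin_cases j
      · exact le_rfl
      · exact agentBest_le_of _ _ _ _ 0 (best_L s hs hs').2)
    have h3 := UL s hs hs'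
    simp only [Matrix.cons_val_zero] at h2
    linarith
  · have h1 : OPT (FJ s) rJ (cJ s (s^2) 0) ≤ 1 - 0.188 * s := by
      refine OPT_le _ _ _ _ fun p hp => ?_
      have hT : 0 ≤ (1/2-s/4) * (p 0 + p 1) :=
        mul_nonneg (by linarith) (add_nonneg (hp 0) (hp 1))
      rcases U2_J s hs hs' p hp with h | h | ⟨h, e⟩
      · linarith
      · linarith
      · have := (key_bound s _ _ hs hs' (hp 1) (hp 0) e).1
        linarith
    have h2 := le_UprinMenu (FJ s) rJ ![pL s, pR s] (cJ s (s^2) 0) 1 (by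
      intro j; fin_cases j
      · exact agentBest_le_of _ _ _ _ 2 (best_R s hs hs').1
      · exact le_rfl)
    have h3 := UR s hs hs'
    simp only [Matrix.cons_val_one, Matrix.cons_val_zero] at h2
    linarith
  · have h1 : OPT (FJ s) rJ (cJ s (s^2) (s^2)) ≤ 1 - s/2 := by
      refine OPT_le _ _ _ _ fun p hp => ?_
      have hT : 0 ≤ (1/2-s/4) * (p 0 + p 1) :=
        mul_nonneg (by linarith) (add_nonneg (hp 0) (hp 1))
      rcases U3_J s hs hs' p hp with h | h <;> linarith
    have h2 := le_UprinMenu (FJ s) rJ ![pL s, pR s] (cJ s (s^2) (s^2)) 0 (by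
      intro j; fin_cases j
      · exact le_rfl
      · exact agentBest_le_of _ _ _ _ 4 (best_C s hs hs').2)
    have h3 := UC s hs hs'
    simp only [Matrix.cons_val_zero] at h2
    linarith

theorem rand_J (s : ℝ) (hs : 0 < s) (hs' : s < 1/8) (γ : RandCon (Fin 3)) (hγ : γ.valid) :
    UprinRand (FJ s) rJ γ (cJ s 0 (s^2)) + UprinRand (FJ s) rJ γ (cJ s (s^2) 0)
      + 2 * UprinRand (FJ s) rJ γ (cJ s (s^2) (s^2)) ≤ 4 - 1.4 * s - 4 * s / 9 := by
  have h : ∑ i, γ.q i * (Uprin (FJ s) rJ (γ.ps i) (cJ s 0 (s^2))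
      + Uprin (FJ s) rJ (γ.ps i) (cJ s (s^2) 0)
      + 2 * Uprin (FJ s) rJ (γ.ps i) (cJ s (s^2) (s^2)))
      ≤ ∑ i, γ.q i * (4 - 1.4 * s - 4 * s / 9) :=
    Finset.sum_le_sum fun i _ =>
      mul_le_mul_of_nonneg_left (sum_J s hs hs' _ (hγ i)) (γ.q_nonneg i)
  rw [← Finset.sum_mul, γ.q_sum, one_mul] at h
  refine le_trans (le_of_eq ?_) h
  simp only [UprinRand, Finset.mul_sum, ← Finset.sum_add_distrib]
  refine Finset.sum_congr rfl fun i _ => ?_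
  ring

theorem norm_J (s x y x' y' : ℝ) (hs : 0 < s) (hx : x = 0 ∨ x = s^2) (hy : y = 0 ∨ y = s^2)
    (hx' : x' = 0 ∨ x' = s^2) (hy' : y' = 0 ∨ y' = s^2) :
    ‖cJ s x y - cJ s x' y'‖ ≤ s^2 := by
  rw [pi_norm_le_iff_of_nonneg (by positivity)]
  intro i
  have h := sq_nonneg s
  have key : ∀ u v : ℝ, (u = 0 ∨ u = s^2) → (v = 0 ∨ v = s^2) → |u - v| ≤ s^2 := by
    rintro u v (rfl | rfl) (rfl | rfl) <;> simp [h]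
  fin_cases i
  · simpa [cJ] using key _ _ hx hx'
  · simpa [cJ] using h
  · simpa [cJ] using key _ _ hy hy'
  · simpa [cJ] using h
  · simpa [cJ] using h

end helpers

/-- In the instance `J_δ` (for `δ ∈ (0, 1/64)`): the uncertainty level
is `d(C) = δ`; some menu of two deterministic contracts has regret at most `√δ/10`; and
every randomized contract has regret at least `√δ/9`. -/
theorem menus_beat_randomization_instance
    (δ : ℝ) (hδ : δ ∈ Set.Ioo (0:ℝ) (1/64))
    (F : Fin 5 → Fin 3 → ℝ)
    (hF : F = ![![(1:ℝ), 0, 0],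
                ![1 - Real.sqrt δ, 0, Real.sqrt δ],
                ![0, 1, 0],
                ![0, 1 - Real.sqrt δ, Real.sqrt δ],
                ![1/2 - Real.sqrt δ/4, 1/2 - Real.sqrt δ/4, Real.sqrt δ/2]])
    (r : Fin 3 → ℝ) (hr : r = ![(1:ℝ), 1, 0])
    (C : Set (Fin 5 → ℝ))
    (hC : C = {![Real.sqrt δ/10, Real.sqrt δ/10, Real.sqrt δ/10 + δ, Real.sqrt δ/10, 0],
               ![Real.sqrt δ/10 + δ, Real.sqrt δ/10, Real.sqrt δ/10, Real.sqrt δ/10, 0],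
               ![Real.sqrt δ/10 + δ, Real.sqrt δ/10, Real.sqrt δ/10 + δ, Real.sqrt δ/10, 0]}) :
    uncLevel C = δ ∧
      (∃ m : Fin 2 → Fin 3 → ℝ, (∀ i, IsContract (m i)) ∧
        regretMenu F r C m ≤ Real.sqrt δ / 10) ∧
      ∀ γ : RandCon (Fin 3), γ.valid → regretRand F r C γ ≥ Real.sqrt δ / 9 := by
  obtain ⟨h0, h1⟩ := hδ
  obtain ⟨s, hs⟩ : ∃ s, s = Real.sqrt δ := ⟨_, rfl⟩
  have hpos : 0 < s := by rw [hs]; exact Real.sqrt_pos.2 h0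
  have hsq : δ = s^2 := by rw [hs, Real.sq_sqrt h0.le]
  have hlt : s < 1/8 := by
    by_contra hcon
    nlinarith
  rw [← hs] at hF hC ⊢
  rw [hsq] at hC
  rw [hsq]
  have hF' : F = FJ s := hF
  have hr' : r = rJ := hr
  have hC' : C = {cJ s 0 (s^2), cJ s (s^2) 0, cJ s (s^2) (s^2)} := by
    rw [hC]; simp [cJ]
  clear hF hr hC hs hsq h0 h1
  subst hF' hr' hC'
  have hmem : ∀ c : Fin 5 → ℝ, c ∈ ({cJ s 0 (s^2), cJ s (s^2) 0, cJ s (s^2) (s^2)} :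
      Set (Fin 5 → ℝ)) ↔ (c = cJ s 0 (s^2) ∨ c = cJ s (s^2) 0 ∨ c = cJ s (s^2) (s^2)) := by
    intro c; simp
  refine ⟨?_, ⟨![pL s, pR s], ?_, ?_⟩, ?_⟩
  · have hb : ∀ x ∈ { x | ∃ c ∈ ({cJ s 0 (s^2), cJ s (s^2) 0, cJ s (s^2) (s^2)} :
        Set (Fin 5 → ℝ)), ∃ c' ∈ ({cJ s 0 (s^2), cJ s (s^2) 0, cJ s (s^2) (s^2)} :
        Set (Fin 5 → ℝ)), x = ‖c - c'‖ }, x ≤ s^2 := by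
      rintro x ⟨c, hc, c', hc', rfl⟩
      rw [hmem] at hc hc'
      rcases hc with rfl | rfl | rfl <;> rcases hc' with rfl | rfl | rfl <;>
        exact norm_J _ _ _ _ _ hpos (by simp) (by simp) (by simp) (by simp)
    refine le_antisymm (csSup_le ⟨_, _, (hmem _).2 (Or.inl rfl), _, (hmem _).2 (Or.inl rfl), rfl⟩ hb) ?_
    refine le_trans ?_ (le_csSup ⟨_, hb⟩ ⟨_, (hmem _).2 (Or.inr (Or.inr rfl)), _,
      (hmem _).2 (Or.inl rfl), rfl⟩)
    refine le_trans ?_ (norm_le_pi_norm _ (0 : Fin 5))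
    simp [cJ]
  · intro i; fin_cases i
    · exact pL_con s hpos
    · exact pR_con s hpos
  · refine csSup_le ⟨_, _, (hmem _).2 (Or.inl rfl), rfl⟩ ?_
    rintro x ⟨c, hc, rfl⟩
    exact menu_J s hpos hlt c ((hmem c).1 hc)
  · intro γ hγ
    have hbdd : BddAbove { x | ∃ c ∈ ({cJ s 0 (s^2), cJ s (s^2) 0, cJ s (s^2) (s^2)} :
        Set (Fin 5 → ℝ)), x = OPT (FJ s) rJ c - UprinRand (FJ s) rJ γ c } := by
      refine (Set.Finite.subset ((Set.toFinite ({cJ s 0 (s^2), cJ s (s^2) 0,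
        cJ s (s^2) (s^2)} : Set (Fin 5 → ℝ))).image
        (fun c => OPT (FJ s) rJ c - UprinRand (FJ s) rJ γ c)) ?_).bddAbove
      rintro x ⟨c, hc, rfl⟩
      exact ⟨c, hc, rfl⟩
    have r1 := le_csSup hbdd ⟨_, (hmem _).2 (Or.inl rfl), rfl⟩
    have r2 := le_csSup hbdd ⟨_, (hmem _).2 (Or.inr (Or.inl rfl)), rfl⟩
    have r3 := le_csSup hbdd ⟨_, (hmem _).2 (Or.inr (Or.inr rfl)), rfl⟩
    have o1 := le_OPT (FJ s) rJ (cJ s 0 (s^2)) 1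
      (fun p hp => Uprin_J_le_one s _ _ hpos hlt p hp) _ (pL_con s hpos)
    have o2 := le_OPT (FJ s) rJ (cJ s (s^2) 0) 1
      (fun p hp => Uprin_J_le_one s _ _ hpos hlt p hp) _ (pR_con s hpos)
    have o3 := le_OPT (FJ s) rJ (cJ s (s^2) (s^2)) 1
      (fun p hp => Uprin_J_le_one s _ _ hpos hlt p hp) 0 (fun _ => le_rfl)
    have b1 := UL s hpos hlt
    have b2 := UR s hpos hlt
    have b3 := U0 s hpos
    have key := rand_J s hpos hlt γ hγ
    change s / 9 ≤ regretRand _ _ _ _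
    unfold regretRand
    linarith
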